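/- arXiv:math/0205040 — 2 statements merged into one kernel-verified Lean document; each statement's English description precedes it below -/
import Mathlib

section
/- The elements e₁ = [[x₂,x₃],x₄], e₂ = [[x₁,x₃],x₄], e₃ = [[x₁,x₂],x₄], e₄ = [[x₁,x₂],x₃] generate the third term γ₃(B(4,3)) of the lower central series of B(4,3), and γ₃(B(4,3)) is an elementary abelian 3-group of order 3⁴ = 81 (i.e., it is commutative, every element has order dividing 3, and it has cardinality 81). -/
/-- The free Burnside group `B(4,3)` of exponent 3 on four generators:
the free group on four generators modulo the normal closure of all cubes. -/
abbrev B43 : Type :=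
  FreeGroup (Fin 4) ⧸ Subgroup.normalClosure {w : FreeGroup (Fin 4) | ∃ v, w = v ^ 3}

/-- The images `x₁, x₂, x₃, x₄` of the free generators in `B(4,3)`. -/
def x (i : Fin 4) : B43 := QuotientGroup.mk (FreeGroup.of i)

open scoped commutatorElement

/-- The elements `e₁ = [[x₂,x₃],x₄]`, `e₂ = [[x₁,x₃],x₄]`, `e₃ = [[x₁,x₂],x₄]`,
`e₄ = [[x₁,x₂],x₃]` of `B(4,3)`, where `⁅a, b⁆ = a * b * a⁻¹ * b⁻¹`. -/
def e : Fin 4 → B43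
  | 0 => ⁅⁅x 1, x 2⁆, x 3⁆
  | 1 => ⁅⁅x 0, x 2⁆, x 3⁆
  | 2 => ⁅⁅x 0, x 1⁆, x 3⁆
  | 3 => ⁅⁅x 0, x 1⁆, x 2⁆

/-!
In a group of exponent 3 every element commutes with its conjugates, so the normal closure `N` of
an element is abelian. Conjugation is then a representation `ρ` on `N` with `(ρ g - 1) ^ 2 = 0` for
all `g`; comparing `ρ (g * h)⁻¹` with `ρ h⁻¹ * ρ g⁻¹` shows that the operators `ρ g - 1`
anticommute. The same holds for `g * h` in place of `g`, which together with `3 = 0` forces all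
products of three of these operators to vanish: four-fold commutators are trivial. Hence
`⁅⁅a, b⁆, c⁆` is central, multiplicative in each variable and alternating, and `γ₃` is spanned by
the commutators `⁅⁅x i, x j⁆, x k⁆` of generators with `i < j < k`.

For their independence, map all generators but `x i`, `x j`, `x k` to `1`. It remains to find a
group of exponent 3 with a nontrivial triple commutator: the affine group of maps `r ↦ u * r + b`
over the exterior algebra of a plane over the field with three elements, where `u` runs through
the elements of augmentation `1`.
-/

section QuadraticRepresentation

variable {G R : Type*} [Group G] [Ring R] (ρ : G →* R)

theorem map_inv_eq_one_sub_of_sq_eq_zero {g : G} (hg : (ρ g - 1) * (ρ g - 1) = 0) :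
    ρ g⁻¹ = 1 - (ρ g - 1) := by
  have hleft : (1 - (ρ g - 1)) * ρ g = 1 := by
    calc (1 - (ρ g - 1)) * ρ g = 1 - (ρ g - 1) * (ρ g - 1) := by noncomm_ring
      _ = 1 := by rw [hg, sub_zero]
  have hright : ρ g * ρ g⁻¹ = 1 := by rw [← map_mul, mul_inv_cancel, map_one]
  exact (left_inv_eq_right_inv hleft hright).symm

variable (hρ : ∀ g, (ρ g - 1) * (ρ g - 1) = 0)

include hρ

theorem sub_one_mul_sub_one_add_swap_eq_zero (g h : G) :
    (ρ g - 1) * (ρ h - 1) + (ρ h - 1) * (ρ g - 1) = 0 := by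
  have hprod : (1 - (ρ h - 1)) * (1 - (ρ g - 1)) = 1 - (ρ g * ρ h - 1) := by
    simp only [← map_inv_eq_one_sub_of_sq_eq_zero ρ (hρ _), ← map_mul, mul_inv_rev]
  calc (ρ g - 1) * (ρ h - 1) + (ρ h - 1) * (ρ g - 1)
      = (1 - (ρ h - 1)) * (1 - (ρ g - 1)) - (1 - (ρ g * ρ h - 1)) := by noncomm_ring
    _ = 0 := by rw [hprod, sub_self]

theorem sub_one_mul_sub_one_mul_sub_one_eq_zero (h3 : (3 : R) = 0) (g h k : G) :
    (ρ g - 1) * (ρ h - 1) * (ρ k - 1) = 0 := by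
  have hgh := sub_one_mul_sub_one_add_swap_eq_zero ρ hρ (g * h) k
  have hgk := sub_one_mul_sub_one_add_swap_eq_zero ρ hρ g k
  have hhk := sub_one_mul_sub_one_add_swap_eq_zero ρ hρ h k
  have hdecomp : ρ (g * h) - 1 = (ρ g - 1) + (ρ h - 1) + (ρ g - 1) * (ρ h - 1) := by
    rw [map_mul]; noncomm_ring
  rw [hdecomp] at hgh
  generalize ρ g - 1 = X at *
  generalize ρ h - 1 = Y at *
  generalize ρ k - 1 = Z at *
  have hanti : X * Y * Z + Z * (X * Y) = 0 := by
    calc X * Y * Z + Z * (X * Y) = ((X + Y + X * Y) * Z + Z * (X + Y + X * Y))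
          - (X * Z + Z * X) - (Y * Z + Z * Y) := by noncomm_ring
      _ = 0 := by rw [hgh, hgk, hhk, sub_zero, sub_zero]
  have hcomm : X * Y * Z - Z * (X * Y) = 0 := by
    calc X * Y * Z - Z * (X * Y) = X * (Y * Z + Z * Y) - (X * Z + Z * X) * Y := by noncomm_ring
      _ = 0 := by rw [hgk, hhk, mul_zero, zero_mul, sub_zero]
  calc X * Y * Z = 3 * (X * Y * Z) - (X * Y * Z + Z * (X * Y)) - (X * Y * Z - Z * (X * Y)) := by
        noncomm_ring
    _ = 0 := by rw [h3, hanti, hcomm, zero_mul, sub_zero, sub_zero]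

end QuadraticRepresentation

section CentralCommutators

variable {G : Type*} [Group G]

theorem normal_of_le_center {N : Subgroup G} (hN : N ≤ Subgroup.center G) : N.Normal :=
  ⟨fun n hn g => by rwa [Subgroup.mem_center_iff.1 (hN hn) g, mul_inv_cancel_right]⟩

theorem commutator_mul_left_of_mem_center {u v c : G} (h : ⁅v, c⁆ ∈ Subgroup.center G) :
    ⁅u * v, c⁆ = ⁅u, c⁆ * ⁅v, c⁆ := by
  rw [commutatorElement_mul_left_eq_conj_mul, Subgroup.mem_center_iff.1 h u, mul_inv_cancel_right,
    Subgroup.mem_center_iff.1 h]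

theorem commutator_mul_right_of_mem_center {u v c : G} (h : ⁅c, v⁆ ∈ Subgroup.center G) :
    ⁅c, u * v⁆ = ⁅c, u⁆ * ⁅c, v⁆ := by
  rw [commutatorElement_mul_right_eq_mul_conj, mul_assoc, mul_assoc, ← mul_assoc u,
    Subgroup.mem_center_iff.1 h u, mul_inv_cancel_right]

theorem lowerCentralSeries_two_le_iff {N : Subgroup G} [N.Normal] :
    (⊤ : Subgroup G).lowerCentralSeries 2 ≤ N ↔ ∀ a b c : G, ⁅⁅a, b⁆, c⁆ ∈ N := by
  constructor
  · intro hle a b c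
    exact hle (Subgroup.commutator_mem_commutator
      (Subgroup.commutator_mem_commutator (Subgroup.mem_top a) (Subgroup.mem_top b))
      (Subgroup.mem_top c))
  · intro hN
    have hstep : ⁅(⊤ : Subgroup G), ⊤⁆ ≤ N.upperCentralSeriesStep :=
      Subgroup.commutator_le.2 fun a _ b _ => hN a b
    exact Subgroup.commutator_le.2 fun u hu c _ => hstep hu c

theorem map_mem_of_map_mul_of_generators {H ι : Type*} [Group H] {x : ι → G}
    (hx : Subgroup.closure (Set.range x) = ⊤) {S : Subgroup H} {f : G → H}
    (hf : ∀ a b, f (a * b) = f a * f b) (hS : ∀ i, f (x i) ∈ S) (g : G) : f g ∈ S := by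
  have hle : Subgroup.closure (Set.range x) ≤ S.comap (MonoidHom.mk' f hf) := by
    rw [Subgroup.closure_le]
    rintro _ ⟨i, rfl⟩
    exact hS i
  exact hle (hx ▸ Subgroup.mem_top g)

end CentralCommutators

section ExponentThree

variable {G : Type*} [Group G]

section Conj

variable (N : Subgroup G) [N.Normal]

/-- The conjugation action of `G` on a normal subgroup `N`, as a representation on `Additive N`. -/
def conjRepresentation : G →* AddMonoid.End (Additive N) :=
  (monoidEndToAdditive N).toMonoidHom.comp
    ((MulDistribMulAction.toMonoidEnd (MulAut N) N).comp MulAut.conjNormal)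

open scoped IsMulCommutative in
theorem coe_conjRepresentation_sub_one [IsMulCommutative N] (g : G) (n : Additive N) :
    (((conjRepresentation N g - 1) n).toMul : G) = ⁅g, (n.toMul : G)⁆ := by
  change ((MulAut.conjNormal g n.toMul / n.toMul : N) : G) = _
  simp [commutatorElement_def, div_eq_mul_inv]

end Conj

variable (h3 : ∀ g : G, g ^ 3 = 1)

include h3

theorem mul_self_eq_inv (g : G) : g * g = g⁻¹ := by
  rw [eq_inv_iff_mul_eq_one, ← h3 g, pow_three']

theorem commute_conj_self (a g : G) : Commute a (g * a * g⁻¹) := by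
  have hg : g⁻¹ * g⁻¹ = g := by rw [mul_self_eq_inv h3, inv_inv]
  have huv : (g * a * g⁻¹) * (g⁻¹ * a * g) * a = 1 := by
    calc _ = g * a * (g⁻¹ * g⁻¹) * a * g * a := by group
      _ = (g * a) ^ 3 := by simp only [hg, pow_three', mul_assoc]
      _ = 1 := h3 _
  have hvu : (g⁻¹ * a * g) * (g * a * g⁻¹) * a = 1 := by
    calc _ = g⁻¹ * a * (g * g) * a * g⁻¹ * a := by group
      _ = (g⁻¹ * a) ^ 3 := by rw [mul_self_eq_inv h3 g]; simp only [pow_three', mul_assoc]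
      _ = 1 := h3 _
  generalize g * a * g⁻¹ = u at *
  generalize g⁻¹ * a * g = v at *
  have huv_comm : Commute v u := mul_right_cancel (hvu.trans huv.symm)
  rw [eq_inv_of_mul_eq_one_right huv]
  exact ((Commute.refl u).mul_left huv_comm).inv_left

theorem commute_conj_conj (a g h : G) : Commute (g * a * g⁻¹) (h * a * h⁻¹) := by
  have hconj := commute_conj_self h3 (g * a * g⁻¹) (h * g⁻¹)
  rwa [show h * g⁻¹ * (g * a * g⁻¹) * (h * g⁻¹)⁻¹ = h * a * h⁻¹ by group] at hconj

theorem isMulCommutative_normalClosure_singleton (a : G) :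
    IsMulCommutative (Subgroup.normalClosure {a}) := by
  apply Subgroup.isMulCommutative_closure
  simp only [Group.conjugatesOfSet, Set.mem_singleton_iff, Set.iUnion_iUnion_eq_left]
  rintro _ hu _ hv
  obtain ⟨g, rfl⟩ := isConj_iff.1 hu
  obtain ⟨h, rfl⟩ := isConj_iff.1 hv
  exact commute_conj_conj h3 a g h

theorem commutator_left_commutator_eq_one (g a : G) : ⁅g, ⁅g, a⁆⁆ = 1 := by
  rw [commutatorElement_eq_one_iff_commute,
    show ⁅g, a⁆ = g * (a * g * a⁻¹)⁻¹ by rw [commutatorElement_def]; group]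
  exact (Commute.refl g).mul_right (commute_conj_self h3 g a).inv_right

open scoped IsMulCommutative in
theorem fourfold_commutator_eq_one (k h g a : G) : ⁅k, ⁅h, ⁅g, a⁆⁆⁆ = 1 := by
  have := isMulCommutative_normalClosure_singleton h3 a
  let N := Subgroup.normalClosure {a}
  let ρ := conjRepresentation N
  have hthree : (3 : AddMonoid.End (Additive N)) = 0 := by
    ext n
    exact h3 n.toMul
  have hquad (g : G) : (ρ g - 1) * (ρ g - 1) = 0 := by
    ext n
    change (((ρ g - 1) ((ρ g - 1) n)).toMul : G) = 1
    simp only [ρ, coe_conjRepresentation_sub_one, commutator_left_commutator_eq_one h3]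
  have hzero := DFunLike.congr_fun
    (sub_one_mul_sub_one_mul_sub_one_eq_zero ρ hquad hthree k h g)
    (Additive.ofMul ⟨a, Subgroup.subset_normalClosure rfl⟩)
  have hcoe := congrArg (fun n : Additive N => (n.toMul : G)) hzero
  simpa [ρ, coe_conjRepresentation_sub_one] using hcoe

theorem commutator_commutator_mem_center (a b c : G) : ⁅⁅a, b⁆, c⁆ ∈ Subgroup.center G := by
  rw [← commutatorElement_inv, inv_mem_iff, Subgroup.mem_center_iff]
  exact fun g => commutatorElement_eq_one_iff_mul_comm.1 (fourfold_commutator_eq_one h3 g c a b)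

theorem commutator_commutator_swap_left (a b c : G) : ⁅⁅b, a⁆, c⁆ = ⁅⁅a, b⁆, c⁆⁻¹ := by
  rw [eq_inv_iff_mul_eq_one,
    ← commutator_mul_left_of_mem_center (commutator_commutator_mem_center h3 a b c),
    ← commutatorElement_inv a b, inv_mul_cancel, commutatorElement_one_left]

theorem commutator_commutator_mul_right (a b c d : G) :
    ⁅⁅a, b⁆, c * d⁆ = ⁅⁅a, b⁆, c⁆ * ⁅⁅a, b⁆, d⁆ :=
  commutator_mul_right_of_mem_center (commutator_commutator_mem_center h3 a b d)

theorem commutator_commutator_mul_middle (a c b d : G) :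
    ⁅⁅a, b * d⁆, c⁆ = ⁅⁅a, b⁆, c⁆ * ⁅⁅a, d⁆, c⁆ := by
  have hcentral : ⁅b, ⁅a, d⁆⁆ ∈ Subgroup.center G := by
    rw [← commutatorElement_inv, inv_mem_iff]
    exact commutator_commutator_mem_center h3 a d b
  have hexpand : ⁅a, b * d⁆ = ⁅a, b⁆ * ⁅a, d⁆ * ⁅b, ⁅a, d⁆⁆ := by
    rw [mul_assoc, Subgroup.mem_center_iff.1 hcentral]
    simp only [commutatorElement_def]; group
  have hcomm : ⁅⁅b, ⁅a, d⁆⁆, c⁆ = 1 :=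
    commutatorElement_eq_one_iff_mul_comm.2 (Subgroup.mem_center_iff.1 hcentral c).symm
  rw [hexpand, commutator_mul_left_of_mem_center (hcomm ▸ one_mem _), hcomm, mul_one,
    commutator_mul_left_of_mem_center (commutator_commutator_mem_center h3 a d c)]

theorem commutator_commutator_mul_left (b c a d : G) :
    ⁅⁅a * d, b⁆, c⁆ = ⁅⁅a, b⁆, c⁆ * ⁅⁅d, b⁆, c⁆ := by
  rw [commutator_commutator_swap_left h3 b, commutator_commutator_mul_middle h3, mul_inv_rev,
    ← commutator_commutator_swap_left h3, ← commutator_commutator_swap_left h3,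
    Subgroup.mem_center_iff.1 (commutator_commutator_mem_center h3 a b c)]

theorem commutator_commutator_self_right (a b : G) : ⁅⁅a, b⁆, b⁆ = 1 := by
  rw [commutatorElement_eq_one_iff_commute, ← commutatorElement_inv]
  exact (commutatorElement_eq_one_iff_commute.1
    (commutator_left_commutator_eq_one h3 b a)).symm.inv_left

theorem commutator_commutator_swap_right (a b c : G) : ⁅⁅a, c⁆, b⁆ = ⁅⁅a, b⁆, c⁆⁻¹ := by
  have h := commutator_commutator_self_right h3 a (b * c)
  rw [commutator_commutator_mul_middle h3, commutator_commutator_mul_right h3,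
    commutator_commutator_mul_right h3, commutator_commutator_self_right h3,
    commutator_commutator_self_right h3, mul_one, one_mul] at h
  exact eq_inv_of_mul_eq_one_right h

theorem commutator_commutator_mem_of_generators {ι : Type*} {x : ι → G}
    (hx : Subgroup.closure (Set.range x) = ⊤) {S : Subgroup G}
    (hS : ∀ i j k, ⁅⁅x i, x j⁆, x k⁆ ∈ S) (a b c : G) : ⁅⁅a, b⁆, c⁆ ∈ S := by
  refine map_mem_of_map_mul_of_generators hx (f := (⁅⁅a, b⁆, ·⁆))
    (commutator_commutator_mul_right h3 a b) (fun k => ?_) c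
  refine map_mem_of_map_mul_of_generators hx (f := (⁅⁅a, ·⁆, x k⁆))
    (commutator_commutator_mul_middle h3 a (x k)) (fun j => ?_) b
  exact map_mem_of_map_mul_of_generators hx (f := (⁅⁅·, x j⁆, x k⁆))
    (commutator_commutator_mul_left h3 (x j) (x k)) (fun i => hS i j k) a

theorem commutator_commutator_mem_of_forall_lt {ι : Type*} [LinearOrder ι] {x : ι → G}
    {S : Subgroup G}
    (hS : ∀ i j k, i < j → j < k → ⁅⁅x i, x j⁆, x k⁆ ∈ S) (i j k : ι) :
    ⁅⁅x i, x j⁆, x k⁆ ∈ S := by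
  have mem_of_lt (i j k : ι) (hij : i < j) : ⁅⁅x i, x j⁆, x k⁆ ∈ S := by
    rcases lt_trichotomy k j with hkj | rfl | hjk
    · rw [commutator_commutator_swap_right h3, inv_mem_iff]
      rcases lt_trichotomy k i with hki | rfl | hik
      · rw [commutator_commutator_swap_left h3, inv_mem_iff]
        exact hS k i j hki hij
      · simp only [commutatorElement_self, commutatorElement_one_left, one_mem]
      · exact hS i k j hik hkj
    · simp only [commutator_commutator_self_right h3, one_mem]
    · exact hS i j k hij hjk
  rcases lt_trichotomy i j with hij | rfl | hji
  · exact mem_of_lt i j k hij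
  · simp only [commutatorElement_self, commutatorElement_one_left, one_mem]
  · rw [commutator_commutator_swap_left h3, inv_mem_iff]
    exact mem_of_lt j i k hji

end ExponentThree

theorem orderEmbedding_eq_of_range_subset {κ α : Type*} [LinearOrder κ] [Finite κ] [Preorder α]
    {s t : κ ↪o α} (h : Set.range s ⊆ Set.range t) : s = t := by
  refine OrderEmbedding.range_inj.1 (Set.eq_of_subset_of_ncard_le h ?_ (Set.finite_range t))
  rw [← Set.image_univ, ← Set.image_univ, Set.ncard_image_of_injective _ s.injective,
    Set.ncard_image_of_injective _ t.injective]

section TripleCommutator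

variable {G : Type*} [Group G]

/-- The left-normed commutator `⁅⁅v 0, v 1⁆, v 2⁆` of a triple `v`. -/
def tripleCommutator (v : Fin 3 → G) : G := ⁅⁅v 0, v 1⁆, v 2⁆

theorem map_tripleCommutator {H : Type*} [Group H] (f : G →* H) (v : Fin 3 → G) :
    f (tripleCommutator v) = tripleCommutator (f ∘ v) := by
  simp only [tripleCommutator, map_commutatorElement, Function.comp_apply]

theorem tripleCommutator_eq_one_of_apply_eq_one {v : Fin 3 → G} {i : Fin 3} (hi : v i = 1) :
    tripleCommutator v = 1 := by
  fin_cases i <;> simp_all [tripleCommutator]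

/-- The commutators `⁅⁅x i, x j⁆, x k⁆` of a family `x` with `i < j < k`; such a triple of indices
is encoded as an order embedding of `Fin 3`. -/
def basicTripleCommutator {ι : Type*} [Preorder ι] (x : ι → G) (t : Fin 3 ↪o ι) : G :=
  tripleCommutator (x ∘ t)

variable {ι : Type*} [LinearOrder ι] {x : ι → G}

theorem basicTripleCommutator_extend_self (v : Fin 3 → G) (t : Fin 3 ↪o ι) :
    basicTripleCommutator (Function.extend t v 1) t = tripleCommutator v := by
  rw [basicTripleCommutator, Function.extend_comp t.injective]

theorem basicTripleCommutator_extend_of_ne (v : Fin 3 → G) {t t' : Fin 3 ↪o ι} (h : t' ≠ t) :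
    basicTripleCommutator (Function.extend t v 1) t' = 1 := by
  obtain ⟨r, hr⟩ : ∃ r, t' r ∉ Set.range t := by
    by_contra! hsub
    exact h (orderEmbedding_eq_of_range_subset (Set.range_subset_iff.2 hsub))
  exact tripleCommutator_eq_one_of_apply_eq_one (Function.extend_apply' _ _ _ hr)

theorem commutator_commutator_mem_range_basicTripleCommutator {i j k : ι} (hij : i < j)
    (hjk : j < k) : ⁅⁅x i, x j⁆, x k⁆ ∈ Set.range (basicTripleCommutator x) := by
  have hmono : StrictMono ![i, j, k] := by
    rw [Fin.strictMono_iff_lt_succ]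
    intro r
    fin_cases r <;> assumption
  exact ⟨OrderEmbedding.ofStrictMono _ hmono, rfl⟩

theorem closure_range_basicTripleCommutator_le_center (h3 : ∀ g : G, g ^ 3 = 1) :
    Subgroup.closure (Set.range (basicTripleCommutator x)) ≤ Subgroup.center G := by
  rw [Subgroup.closure_le]
  rintro _ ⟨t, rfl⟩
  exact commutator_commutator_mem_center h3 _ _ _

theorem closure_range_basicTripleCommutator (h3 : ∀ g : G, g ^ 3 = 1)
    (hx : Subgroup.closure (Set.range x) = ⊤) :
    Subgroup.closure (Set.range (basicTripleCommutator x)) =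
      (⊤ : Subgroup G).lowerCentralSeries 2 := by
  have : (Subgroup.closure (Set.range (basicTripleCommutator x))).Normal :=
    normal_of_le_center (closure_range_basicTripleCommutator_le_center h3)
  apply le_antisymm
  · rw [Subgroup.closure_le]
    rintro _ ⟨t, rfl⟩
    exact lowerCentralSeries_two_le_iff.1 le_rfl _ _ _
  · exact lowerCentralSeries_two_le_iff.2 <| commutator_commutator_mem_of_generators h3 hx <|
      commutator_commutator_mem_of_forall_lt h3 fun i j k hij hjk =>
        Subgroup.subset_closure (commutator_commutator_mem_range_basicTripleCommutator hij hjk)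

end TripleCommutator

section Independence

variable {G κ : Type*} [Group G] {y : κ → G}

theorem iSup_zpowers_eq_closure_range :
    ⨆ i, Subgroup.zpowers (y i) = Subgroup.closure (Set.range y) := by
  simp only [Subgroup.zpowers_eq_closure, ← Subgroup.closure_iUnion, Set.iUnion_singleton_eq_range]

theorem iSupIndep_zpowers_of_monoidHom {H : Type*} [Group H] (f : κ → G →* H)
    (hf : ∀ i j, j ≠ i → f i (y j) = 1) (hord : ∀ i, orderOf (y i) ∣ orderOf (f i (y i))) :
    iSupIndep fun i => Subgroup.zpowers (y i) := by
  intro i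
  rw [Subgroup.disjoint_def]
  rintro _ ⟨n, rfl⟩ hn
  have hker : ⨆ j, ⨆ (_ : j ≠ i), Subgroup.zpowers (y j) ≤ (f i).ker :=
    iSup₂_le fun j hj => Subgroup.zpowers_le.2 (hf i j hj)
  have hpow : f i (y i) ^ n = 1 := by rw [← map_zpow]; exact hker hn
  rw [← orderOf_dvd_iff_zpow_eq_one] at hpow ⊢
  exact (Int.natCast_dvd_natCast.2 (hord i)).trans hpow

theorem card_closure_range_of_iSupIndep_zpowers [Fintype κ]
    (hcomm : Pairwise fun i j => Commute (y i) (y j))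
    (hind : iSupIndep fun i => Subgroup.zpowers (y i)) :
    Nat.card (Subgroup.closure (Set.range y)) = ∏ i, orderOf (y i) := by
  have hcomm_zpowers : Pairwise fun i j => ∀ a b : G,
      a ∈ Subgroup.zpowers (y i) → b ∈ Subgroup.zpowers (y j) → Commute a b := by
    rintro i j hij _ _ ⟨m, rfl⟩ ⟨n, rfl⟩
    exact (hcomm hij).zpow_zpow m n
  have hrange :
      (Subgroup.noncommPiCoprod hcomm_zpowers).range = Subgroup.closure (Set.range y) := by
    rw [Subgroup.noncommPiCoprod_range, iSup_zpowers_eq_closure_range]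
  rw [← hrange, ← Nat.card_congr (MonoidHom.ofInjective
    (Subgroup.injective_noncommPiCoprod_of_iSupIndep hind)).toEquiv, Nat.card_pi]
  simp only [Nat.card_zpowers]

end Independence

section SemidirectProduct

variable {N G : Type*} [CommGroup N] [Group G] (φ : G →* MulAut N)

theorem semidirectProduct_pow_three_eq_one (hG : ∀ g : G, g ^ 3 = 1)
    (hN : ∀ (g : G) (n : N), n * (φ g n * φ (g * g) n) = 1) (w : N ⋊[φ] G) : w ^ 3 = 1 := by
  ext
  · simpa [pow_three, mul_assoc] using hN w.right w.left
  · simpa [pow_three] using hG w.right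

theorem commutator_inl_inr (n : N) (g : G) :
    ⁅(SemidirectProduct.inl n : N ⋊[φ] G), (SemidirectProduct.inr g : N ⋊[φ] G)⁆ =
      SemidirectProduct.inl (n / φ g n) := by
  ext <;> simp [commutatorElement_def, div_eq_mul_inv]

end SemidirectProduct

section AffineGroup

variable {R : Type*} [Ring R]

theorem one_add_self_add_mul_self_eq_zero (h3 : (3 : R) = 0) {u : R}
    (hu : (u - 1) * (u - 1) = 0) : 1 + u + u * u = 0 := by
  calc 1 + u + u * u = (u - 1) * (u - 1) + 3 * u := by noncomm_ring
    _ = 0 := by rw [hu, h3, zero_mul, add_zero]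

theorem pow_three_eq_one_of_sub_one_mul_self (h3 : (3 : R) = 0) {u : R}
    (hu : (u - 1) * (u - 1) = 0) : u ^ 3 = 1 := by
  rw [← sub_eq_zero]
  calc u ^ 3 - 1 = (1 + u + u * u) * (u - 1) := by noncomm_ring
    _ = 0 := by rw [one_add_self_add_mul_self_eq_zero h3 hu, zero_mul]

variable (U : Subgroup Rˣ)

/-- Left multiplication by the elements of `U`, as automorphisms of the additive group of `R`. -/
def mulLeftAut : U →* MulAut (Multiplicative R) :=
  (MulAutMultiplicative R).symm.toMonoidHom.comp (DistribMulAction.toAddAut U R)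

theorem mulLeftAut_ofAdd (u : U) (r : R) :
    mulLeftAut U u (Multiplicative.ofAdd r) = Multiplicative.ofAdd (((u : Rˣ) : R) * r) := rfl

/-- The affine group of the maps `r ↦ u * r + b` of `R` with `u ∈ U` and `b : R`. -/
abbrev AffineGroup : Type _ := Multiplicative R ⋊[mulLeftAut U] U

namespace AffineGroup

variable {U}

theorem pow_three_eq_one (h3 : (3 : R) = 0) (hU : ∀ u ∈ U, ((u : R) - 1) * (u - 1) = 0)
    (w : AffineGroup U) : w ^ 3 = 1 := by
  refine semidirectProduct_pow_three_eq_one _ (fun u => ?_) (fun u r => ?_) w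
  · have hpow := pow_three_eq_one_of_sub_one_mul_self h3 (hU u u.2)
    exact Subtype.ext (Units.ext (by simpa using hpow))
  · induction r with | ofAdd r
    have hsum := one_add_self_add_mul_self_eq_zero h3 (hU u u.2)
    rw [mulLeftAut_ofAdd, mulLeftAut_ofAdd, ← ofAdd_add, ← ofAdd_add, ofAdd_eq_one]
    calc r + (((u : Rˣ) : R) * r + (((u * u : U) : Rˣ) : R) * r)
        = (1 + ((u : Rˣ) : R) + (u : Rˣ) * (u : Rˣ)) * r := by push_cast; noncomm_ring
      _ = 0 := by rw [hsum, zero_mul]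

theorem tripleCommutator_inl_inr_inr (r : R) (u v : U) :
    tripleCommutator (![.inl (.ofAdd r), .inr u, .inr v] : Fin 3 → AffineGroup U) =
      .inl (.ofAdd ((((v : Rˣ) : R) - 1) * (((u : Rˣ) : R) - 1) * r)) := by
  change ⁅⁅(SemidirectProduct.inl (.ofAdd r) : AffineGroup U), SemidirectProduct.inr u⁆,
    SemidirectProduct.inr v⁆ = _
  rw [commutator_inl_inr, mulLeftAut_ofAdd, ← ofAdd_sub, commutator_inl_inr, mulLeftAut_ofAdd,
    ← ofAdd_sub]
  congr 2
  noncomm_ring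

end AffineGroup

end AffineGroup

section NilpotentQuaternions

open scoped Quaternion

/-- The augmentation of `ℍ[S,0,0,0]`, which is the exterior algebra of a free `S`-module on
`i` and `j`, with `k = i * j`. -/
def augmentation (S : Type*) [CommRing S] : ℍ[S,0,0,0] →* S where
  toFun := QuaternionAlgebra.re
  map_one' := rfl
  map_mul' a b := by simp

theorem sub_one_mul_self_eq_zero_of_augmentation_eq_one {S : Type*} [CommRing S] {u : ℍ[S,0,0,0]}
    (hu : augmentation S u = 1) : (u - 1) * (u - 1) = 0 := by
  have hre : u.re = 1 := hu
  ext <;> simp [hre, mul_comm]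

theorem exists_group_pow_three_eq_one_tripleCommutator_ne_one :
    ∃ (H : Type) (_ : Group H), (∀ h : H, h ^ 3 = 1) ∧
      ∃ v : Fin 3 → H, tripleCommutator v ≠ 1 := by
  let U : Subgroup (ℍ[ZMod 3,0,0,0])ˣ := (Units.map (augmentation (ZMod 3))).ker
  have hthree : (3 : ℍ[ZMod 3,0,0,0]) = 0 := by ext <;> rfl
  let u : U := ⟨⟨⟨1, 1, 0, 0⟩, ⟨1, -1, 0, 0⟩, by ext <;> simp, by ext <;> simp⟩, Units.ext rfl⟩
  let v : U := ⟨⟨⟨1, 0, 1, 0⟩, ⟨1, 0, -1, 0⟩, by ext <;> simp, by ext <;> simp⟩, Units.ext rfl⟩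
  refine ⟨AffineGroup U, inferInstance,
    AffineGroup.pow_three_eq_one hthree fun _ hw =>
      sub_one_mul_self_eq_zero_of_augmentation_eq_one (congrArg Units.val hw),
    ![.inl (.ofAdd 1), .inr u, .inr v], ?_⟩
  rw [AffineGroup.tripleCommutator_inl_inr_inr, ← map_one SemidirectProduct.inl,
    SemidirectProduct.inl_injective.ne_iff, ofAdd_eq_one.ne]
  intro h
  have himK := congrArg QuaternionAlgebra.imK h
  simp [u, v] at himK

end NilpotentQuaternions

/-- The free Burnside group of exponent `n` on the generators `ι`: the free group on `ι` modulo
the normal closure of all `n`-th powers. -/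
abbrev FreeBurnsideGroup (n : ℕ) (ι : Type*) : Type _ :=
  FreeGroup ι ⧸ Subgroup.normalClosure {w : FreeGroup ι | ∃ v, w = v ^ n}

namespace FreeBurnsideGroup

variable {n : ℕ} {ι : Type*}

/-- The image in the free Burnside group of a free generator. -/
def of (i : ι) : FreeBurnsideGroup n ι := QuotientGroup.mk (FreeGroup.of i)

theorem pow_eq_one (g : FreeBurnsideGroup n ι) : g ^ n = 1 := by
  induction g using QuotientGroup.induction_on with | H v
  rw [← QuotientGroup.mk_pow, QuotientGroup.eq_one_iff]
  exact Subgroup.subset_normalClosure ⟨v, rfl⟩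

theorem closure_range_of :
    Subgroup.closure (Set.range (of : ι → FreeBurnsideGroup n ι)) = ⊤ := by
  change Subgroup.closure (Set.range (QuotientGroup.mk' _ ∘ FreeGroup.of)) = ⊤
  rw [Set.range_comp, ← MonoidHom.map_closure, FreeGroup.closure_range_of,
    Subgroup.map_top_of_surjective _ (QuotientGroup.mk'_surjective _)]

variable {H : Type*} [Group H]

/-- The homomorphism to a group satisfying `h ^ n = 1` given by its values on the generators. -/
def lift (hH : ∀ h : H, h ^ n = 1) (f : ι → H) : FreeBurnsideGroup n ι →* H :=
  QuotientGroup.lift _ (FreeGroup.lift f) <| Subgroup.normalClosure_le_normal <| by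
    rintro _ ⟨v, rfl⟩
    exact (map_pow _ _ _).trans (hH _)

theorem lift_of (hH : ∀ h : H, h ^ n = 1) (f : ι → H) (i : ι) : lift hH f (of i) = f i :=
  FreeGroup.lift_apply_of

variable [LinearOrder ι]

theorem lift_basicTripleCommutator_of (hH : ∀ h : H, h ^ n = 1) (f : ι → H) (t : Fin 3 ↪o ι) :
    lift hH f (basicTripleCommutator of t) = basicTripleCommutator f t := by
  rw [basicTripleCommutator, map_tripleCommutator]
  exact congrArg tripleCommutator (funext fun r => lift_of hH f (t r))

theorem exists_monoidHom_basicTripleCommutator_of :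
    ∃ (H : Type) (_ : Group H) (f : (Fin 3 ↪o ι) → FreeBurnsideGroup 3 ι →* H),
      (∀ t, orderOf (f t (basicTripleCommutator of t)) = 3) ∧
      ∀ t t', t' ≠ t → f t (basicTripleCommutator of t') = 1 := by
  obtain ⟨H, _, hH, v, hv⟩ := exists_group_pow_three_eq_one_tripleCommutator_ne_one
  refine ⟨H, inferInstance, fun t => lift hH (Function.extend t v 1), fun t => ?_,
    fun t t' htt' => ?_⟩
  · rw [lift_basicTripleCommutator_of, basicTripleCommutator_extend_self]
    exact orderOf_eq_prime (hH _) hv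
  · rw [lift_basicTripleCommutator_of, basicTripleCommutator_extend_of_ne v htt']

theorem orderOf_basicTripleCommutator_of (t : Fin 3 ↪o ι) :
    orderOf (basicTripleCommutator (of : ι → FreeBurnsideGroup 3 ι) t) = 3 := by
  obtain ⟨H, _, f, hord, -⟩ := exists_monoidHom_basicTripleCommutator_of (ι := ι)
  exact Nat.dvd_antisymm (orderOf_dvd_of_pow_eq_one (pow_eq_one _))
    ((hord t).symm.dvd.trans (orderOf_map_dvd (f t) _))

theorem iSupIndep_zpowers_basicTripleCommutator_of :
    iSupIndep fun t =>
      Subgroup.zpowers (basicTripleCommutator (of : ι → FreeBurnsideGroup 3 ι) t) := by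
  obtain ⟨H, _, f, hord, hne⟩ := exists_monoidHom_basicTripleCommutator_of (ι := ι)
  refine iSupIndep_zpowers_of_monoidHom f hne fun t => ?_
  rw [hord, orderOf_basicTripleCommutator_of]

theorem card_closure_range_basicTripleCommutator_of [Finite ι] :
    Nat.card (Subgroup.closure
      (Set.range (basicTripleCommutator (of : ι → FreeBurnsideGroup 3 ι)))) =
      3 ^ (Nat.card ι).choose 3 := by
  have : Finite (Fin 3 ↪o ι) := DFunLike.finite _
  have := Fintype.ofFinite (Fin 3 ↪o ι)
  have hcomm : Pairwise fun t t' : Fin 3 ↪o ι =>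
      Commute (basicTripleCommutator (of : ι → FreeBurnsideGroup 3 ι) t)
        (basicTripleCommutator of t') := fun t t' _ =>
    (Subgroup.mem_center_iff.1 (commutator_commutator_mem_center pow_eq_one _ _ _) _).symm
  rw [card_closure_range_of_iSupIndep_zpowers hcomm iSupIndep_zpowers_basicTripleCommutator_of]
  simp only [orderOf_basicTripleCommutator_of, Finset.prod_const, Finset.card_univ]
  rw [← Nat.card_eq_fintype_card, Nat.card_congr Set.powersetCard.ofFinEmbEquiv,
    Set.powersetCard.card]

end FreeBurnsideGroup

theorem e_eq_basicTripleCommutator (i : Fin 4) :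
    e i = basicTripleCommutator x (Fin.succAboveOrderEmb i) := by
  fin_cases i <;> rfl

theorem exists_eq_succAboveOrderEmb {n : ℕ} (t : Fin n ↪o Fin (n + 1)) :
    ∃ i, t = Fin.succAboveOrderEmb i := by
  obtain ⟨i, hi⟩ : ∃ i, i ∉ Set.range t := by
    by_contra! hsurj
    have hcard := Fintype.card_le_of_surjective t hsurj
    simp only [Fintype.card_fin] at hcard
    omega
  refine ⟨i, orderEmbedding_eq_of_range_subset ?_⟩
  rw [Fin.range_succAboveOrderEmb, Set.subset_compl_singleton_iff]
  exact hi

theorem range_basicTripleCommutator_x :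
    Set.range (basicTripleCommutator x) = {e 0, e 1, e 2, e 3} := by
  ext g
  constructor
  · rintro ⟨t, rfl⟩
    obtain ⟨i, rfl⟩ := exists_eq_succAboveOrderEmb t
    rw [← e_eq_basicTripleCommutator]
    fin_cases i <;> simp
  · rintro (rfl | rfl | rfl | rfl) <;> exact ⟨_, (e_eq_basicTripleCommutator _).symm⟩

open FreeBurnsideGroup in
theorem e_generate_gamma3_general {ι : Type*} [LinearOrder ι] [Finite ι] :
    Subgroup.closure (Set.range (basicTripleCommutator (of : ι → FreeBurnsideGroup 3 ι))) =
      (⊤ : Subgroup (FreeBurnsideGroup 3 ι)).lowerCentralSeries 2 ∧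
    (∀ a b : (⊤ : Subgroup (FreeBurnsideGroup 3 ι)).lowerCentralSeries 2, a * b = b * a) ∧
    (∀ a : (⊤ : Subgroup (FreeBurnsideGroup 3 ι)).lowerCentralSeries 2, a ^ 3 = 1) ∧
    Nat.card ((⊤ : Subgroup (FreeBurnsideGroup 3 ι)).lowerCentralSeries 2) =
      3 ^ (Nat.card ι).choose 3 := by
  have hclosure := closure_range_basicTripleCommutator (x := (of : ι → FreeBurnsideGroup 3 ι))
    pow_eq_one closure_range_of
  have hcenter := closure_range_basicTripleCommutator_le_center
    (x := (of : ι → FreeBurnsideGroup 3 ι)) pow_eq_one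
  rw [hclosure] at hcenter
  refine ⟨hclosure, fun a b => Subtype.ext (Subgroup.mem_center_iff.1 (hcenter b.2) a),
    fun a => Subtype.ext (pow_eq_one (a : FreeBurnsideGroup 3 ι)), ?_⟩
  rw [← hclosure, card_closure_range_basicTripleCommutator_of]

/-- `e₁, e₂, e₃, e₄` generate the third term `γ₃(B(4,3))` of the lower central
series (Mathlib: `lowerCentralSeries B43 2`), which is an elementary abelian
3-group of order `3⁴ = 81`: it is commutative, every element has order dividing 3,
and it has cardinality 81. -/
theorem e_generate_gamma3 :
    Subgroup.closure ({e 0, e 1, e 2, e 3} : Set B43) = (⊤ : Subgroup B43).lowerCentralSeries 2 ∧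
    (∀ a b : ((⊤ : Subgroup B43).lowerCentralSeries 2), a * b = b * a) ∧
    (∀ a : ((⊤ : Subgroup B43).lowerCentralSeries 2), a ^ 3 = 1) ∧
    Nat.card ((⊤ : Subgroup B43).lowerCentralSeries 2) = 81 := by
  rw [← range_basicTripleCommutator_x, show 81 = 3 ^ (Nat.card (Fin 4)).choose 3 by simp]
  exact e_generate_gamma3_general
end

section
/- Every group G in which g³ = 1 for every g ∈ G is nilpotent of class at most 3: the identity [[[a,b],c],d] = 1 holds for all a,b,c,d ∈ G (equivalently, the fourth term γ₄(G) of the lower central series is trivial). -/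
open scoped commutatorElement

/-!
In a group of exponent dividing 3 every element commutes with its conjugates, that is,
`⁅⁅x, y⁆, y⁆ = 1` (the 2-Engel identity), and Levi's argument for 2-Engel groups applies. Expanding
the 2-Engel identity at `y * z` shows that each transposition of `x, y, z` inverts `⁅⁅x, y⁆, z⁆`, so
the Hall–Witt identity reads `⁅⁅x, y⁆, z⁆ ^ 3 = 1`. Now `⁅⁅⁅a, b⁆, c⁆, d⁆ = ⁅⁅c, d⁆, ⁅a, b⁆⁆` is
inverted by the exchange `(a, b) ↔ (c, d)`; but this is an even permutation of the four variables,
so it also fixes that commutator, whose order therefore divides both 2 and 3.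
-/

/-- The 2-Engel condition on a group: all left-normed commutators `[x, y, y]` vanish. It says that
every element commutes with all of its conjugates, so it does not depend on whether `⁅x, y⁆` stands
for `x * y * x⁻¹ * y⁻¹` or for `x⁻¹ * y⁻¹ * x * y`. -/
def IsTwoEngel (G : Type*) [Group G] : Prop :=
  ∀ x y : G, ⁅⁅x, y⁆, y⁆ = 1

section

variable {G : Type*} [Group G]

theorem mul_mul_self_eq_of_mul_pow_three_eq_one {x y : G} (h : (x * y) ^ 3 = 1) :
    x * y * x = y⁻¹ * x⁻¹ * y⁻¹ :=
  calc x * y * x = (x * y) ^ 3 * (y⁻¹ * x⁻¹ * y⁻¹) := by rw [pow_three']; group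
    _ = y⁻¹ * x⁻¹ * y⁻¹ := by rw [h, one_mul]

theorem commute_conj_of_pow_three_eq_one (h : ∀ g : G, g ^ 3 = 1) (x y : G) :
    Commute x (y * x * y⁻¹) := by
  have sq_eq_inv : y * y = y⁻¹ := eq_inv_of_mul_eq_one_left (by rw [← pow_three', h])
  have inv_sq_eq : y⁻¹ * y⁻¹ = y := by rw [← mul_inv_rev, sq_eq_inv, inv_inv]
  calc x * (y * x * y⁻¹) = x * y * x * y⁻¹ := by group
    _ = y⁻¹ * x⁻¹ * (y⁻¹ * y⁻¹) := by
      rw [mul_mul_self_eq_of_mul_pow_three_eq_one (h _), mul_assoc]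
    _ = y * y * x⁻¹ * y := by rw [inv_sq_eq, sq_eq_inv]
    _ = y * (x * y⁻¹ * x) := by
      rw [mul_mul_self_eq_of_mul_pow_three_eq_one (h _)]; group
    _ = y * x * y⁻¹ * x := by group

theorem isTwoEngel_of_pow_three_eq_one (h : ∀ g : G, g ^ 3 = 1) : IsTwoEngel G := fun x y ↦
  ((commute_conj_of_pow_three_eq_one h y x).symm.mul_left (Commute.refl y).inv_left).commutator_eq

namespace IsTwoEngel

theorem commute_commutator_right (hG : IsTwoEngel G) (x y : G) : Commute ⁅x, y⁆ y :=
  commutatorElement_eq_one_iff_commute.mp (hG x y)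

theorem commutator_inv_left (hG : IsTwoEngel G) (x y : G) : ⁅x⁻¹, y⁆ = ⁅x, y⁆⁻¹ := by
  rw [commutatorElement_inv_left, (hG.commute_commutator_right y x).symm.inv_mul_cancel,
    commutatorElement_inv]

theorem conj_commutator_mul (hG : IsTwoEngel G) (x y z : G) :
    z * ⁅x, y * z⁆ * z⁻¹ = ⁅x, y⁆ * ⁅x, z⁆ :=
  calc z * ⁅x, y * z⁆ * z⁻¹ = y⁻¹ * (y * z * ⁅x, y * z⁆) * z⁻¹ := by group
    _ = y⁻¹ * (⁅x, y * z⁆ * (y * z)) * z⁻¹ := by rw [(hG.commute_commutator_right x (y * z)).eq]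
    _ = y⁻¹ * ⁅x, y⁆ * y * ⁅x, z⁆ := by rw [commutatorElement_mul_right_eq_mul_conj]; group
    _ = ⁅x, y⁆ * ⁅x, z⁆ := by rw [(hG.commute_commutator_right x y).symm.inv_mul_cancel]

theorem commute_commutator_commutator_middle (hG : IsTwoEngel G) (x y z : G) :
    Commute ⁅⁅x, y⁆, z⁆ y := by
  have conj_eq : y * ⁅⁅x, y⁆, z⁆ * y⁻¹ = ⁅⁅x, y⁆, z⁆ := by
    simpa [commutatorElement_mul_right_eq_mul_conj, hG x y] using
      hG.conj_commutator_mul ⁅x, y⁆ z y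
  exact (mul_inv_eq_iff_eq_mul.mp conj_eq).symm

theorem commutator_commutator_swap_right (hG : IsTwoEngel G) (x y z : G) :
    ⁅⁅x, z⁆, y⁆ = ⁅⁅x, y⁆, z⁆⁻¹ := by
  have commute_conj : Commute z (y * ⁅x, z⁆ * y⁻¹) := by
    have conj_eq : y * ⁅x, z⁆ * y⁻¹ = ⁅⁅x, z⁆, y⁆⁻¹ * ⁅x, z⁆ := by
      rw [commutatorElement_inv, ← conj_eq_commutatorElement_mul, MulAut.conj_apply]
    rw [conj_eq]
    exact (hG.commute_commutator_commutator_middle x z y).symm.inv_right.mul_right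
      (hG.commute_commutator_right x z).symm
  have expand : z * ⁅x, y⁆ * z⁻¹ * (y * ⁅x, z⁆ * y⁻¹) = ⁅x, y⁆ * ⁅x, z⁆ :=
    calc z * ⁅x, y⁆ * z⁻¹ * (y * ⁅x, z⁆ * y⁻¹)
        = z * ⁅x, y⁆ * (y * ⁅x, z⁆ * y⁻¹) * z⁻¹ := by
          rw [mul_assoc, commute_conj.inv_left.eq, ← mul_assoc]
      _ = z * ⁅x, y * z⁆ * z⁻¹ := by rw [commutatorElement_mul_right_eq_mul_conj]; group
      _ = ⁅x, y⁆ * ⁅x, z⁆ := hG.conj_commutator_mul x y z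
  calc ⁅⁅x, z⁆, y⁆ = ⁅x, y⁆⁻¹ * (⁅x, y⁆ * ⁅x, z⁆) * (y * ⁅x, z⁆ * y⁻¹)⁻¹ := by
        rw [commutatorElement_def ⁅x, z⁆ y]; group
    _ = ⁅x, y⁆⁻¹ * z * ⁅x, y⁆ * z⁻¹ := by rw [← expand]; group
    _ = ⁅⁅x, y⁆, z⁆⁻¹ := by
        rw [← hG.commutator_inv_left ⁅x, y⁆ z, commutatorElement_def ⁅x, y⁆⁻¹, inv_inv]

theorem commutator_commutator_swap_left (hG : IsTwoEngel G) (x y z : G) :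
    ⁅⁅y, x⁆, z⁆ = ⁅⁅x, y⁆, z⁆⁻¹ := by
  rw [← commutatorElement_inv x y, hG.commutator_inv_left]

theorem commutator_commutator_rotate (hG : IsTwoEngel G) (x y z : G) :
    ⁅⁅y, z⁆, x⁆ = ⁅⁅x, y⁆, z⁆ := by
  rw [hG.commutator_commutator_swap_right, hG.commutator_commutator_swap_left, inv_inv]

theorem commutator_commutator_conj (hG : IsTwoEngel G) (x y z : G) :
    ⁅⁅x, y⁆, y * z * y⁻¹⁆ = ⁅⁅x, y⁆, z⁆ :=
  calc ⁅⁅x, y⁆, y * z * y⁻¹⁆ = ⁅y * ⁅x, y⁆ * y⁻¹, y * z * y⁻¹⁆ := by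
        rw [(hG.commute_commutator_right x y).symm.mul_inv_cancel]
    _ = y * ⁅⁅x, y⁆, z⁆ * y⁻¹ := (conjugate_commutatorElement _ _ _).symm
    _ = ⁅⁅x, y⁆, z⁆ := (hG.commute_commutator_commutator_middle x y z).symm.mul_inv_cancel

theorem commutator_commutator_pow_three (hG : IsTwoEngel G) (x y z : G) :
    ⁅⁅x, y⁆, z⁆ ^ 3 = 1 := by
  have hall_witt := commutatorElement_commutatorElement_conj_mul x y z
  rwa [hG.commutator_commutator_conj, hG.commutator_commutator_conj, hG.commutator_commutator_conj,
    ← hG.commutator_commutator_rotate z x y, hG.commutator_commutator_rotate x y z,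
    ← pow_three'] at hall_witt

theorem commutator_commutator_commutator_exchange (hG : IsTwoEngel G) (a b c d : G) :
    ⁅⁅⁅c, d⁆, a⁆, b⁆ = ⁅⁅⁅a, b⁆, c⁆, d⁆ :=
  calc ⁅⁅⁅c, d⁆, a⁆, b⁆ = ⁅⁅⁅a, c⁆, d⁆, b⁆ := by rw [hG.commutator_commutator_rotate a c d]
    _ = ⁅⁅⁅a, c⁆, b⁆, d⁆⁻¹ := hG.commutator_commutator_swap_right _ _ _
    _ = ⁅⁅⁅a, b⁆, c⁆⁻¹, d⁆⁻¹ := by rw [hG.commutator_commutator_swap_right a b c]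
    _ = ⁅⁅⁅a, b⁆, c⁆, d⁆ := by rw [hG.commutator_inv_left, inv_inv]

theorem commutator_commutator_commutator_sq (hG : IsTwoEngel G) (a b c d : G) :
    ⁅⁅⁅a, b⁆, c⁆, d⁆ ^ 2 = 1 := by
  have eq_inv : ⁅⁅⁅a, b⁆, c⁆, d⁆ = ⁅⁅⁅a, b⁆, c⁆, d⁆⁻¹ :=
    calc ⁅⁅⁅a, b⁆, c⁆, d⁆ = ⁅⁅c, d⁆, ⁅a, b⁆⁆ := (hG.commutator_commutator_rotate _ _ _).symm
      _ = ⁅⁅a, b⁆, ⁅c, d⁆⁆⁻¹ := (commutatorElement_inv _ _).symm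
      _ = ⁅⁅⁅c, d⁆, a⁆, b⁆⁻¹ := by rw [hG.commutator_commutator_rotate ⁅c, d⁆ a b]
      _ = ⁅⁅⁅a, b⁆, c⁆, d⁆⁻¹ := by rw [hG.commutator_commutator_commutator_exchange]
  rw [sq, mul_eq_one_iff_eq_inv, ← eq_inv]

theorem commutator_commutator_commutator_eq_one (hG : IsTwoEngel G) (a b c d : G) :
    ⁅⁅⁅a, b⁆, c⁆, d⁆ = 1 := by
  have pow_gcd : ⁅⁅⁅a, b⁆, c⁆, d⁆ ^ Nat.gcd 2 3 = 1 := pow_gcd_eq_one.mpr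
    ⟨hG.commutator_commutator_commutator_sq a b c d, hG.commutator_commutator_pow_three ⁅a, b⁆ c d⟩
  simpa using pow_gcd

end IsTwoEngel

theorem lowerCentralSeries_three_eq_bot_iff :
    (⊤ : Subgroup G).lowerCentralSeries 3 = ⊥ ↔ ∀ a b c d : G, ⁅⁅⁅a, b⁆, c⁆, d⁆ = 1 := by
  simp only [Subgroup.lowerCentralSeries_eq_bot_iff_upperCentralSeries_eq_top,
    Subgroup.eq_top_iff', Subgroup.mem_upperCentralSeries_succ_iff,
    Subgroup.upperCentralSeries_zero, Subgroup.mem_bot]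

end

/-- Levi's theorem on 2-Engel groups. -/
theorem exponent_three_nilpotent_general (G : Type*) [Group G] (hG : IsTwoEngel G) :
    (∀ a b c d : G, ⁅⁅⁅a, b⁆, c⁆, d⁆ = 1) ∧ (⊤ : Subgroup G).lowerCentralSeries 3 = ⊥ :=
  ⟨hG.commutator_commutator_commutator_eq_one,
    lowerCentralSeries_three_eq_bot_iff.mpr hG.commutator_commutator_commutator_eq_one⟩

/-- Every group of exponent dividing 3 (`g³ = 1` for all `g`) is nilpotent of class
at most 3: `[[[a,b],c],d] = 1` for all `a, b, c, d` (where `⁅a, b⁆ = a * b * a⁻¹ * b⁻¹`),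
equivalently the fourth term `γ₄(G)` of the lower central series is trivial
(Mathlib: `lowerCentralSeries G 3 = ⊥`, since `γ₁` has index `0`). -/
theorem exponent_three_nilpotent (G : Type*) [Group G] (h : ∀ g : G, g ^ 3 = 1) :
    (∀ a b c d : G, ⁅⁅⁅a, b⁆, c⁆, d⁆ = 1) ∧ (⊤ : Subgroup G).lowerCentralSeries 3 = ⊥ :=
  exponent_three_nilpotent_general G (isTwoEngel_of_pow_three_eq_one h)
end
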